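/- arXiv:2603.04204 — 5 statements merged into one kernel-verified Lean document; each statement's English description precedes it below -/
import Mathlib

section
/- (Wisdom of Crowds on log-likelihood, case 0 < r ≤ 1.) Let d ≥ 1, k ≥ 1, and let p⁽¹⁾, …, p⁽ᵏ⁾ be probability densities on ℝ^d (strictly positive measurable functions integrating to 1 with respect to Lebesgue measure). Let r be a real number with 0 < r ≤ 1 and set M_{k,r}(x) = ((1/k) · Σ_{i=1}^k p⁽ⁱ⁾(x)^r)^{1/r} and Z_{k,r} = ∫_{ℝ^d} M_{k,r}(x) dx. Then 0 < Z_{k,r} ≤ 1, and for every x ∈ ℝ^d: log(M_{k,r}(x) / Z_{k,r}) ≥ (1/k) · Σ_{i=1}^k log p⁽ⁱ⁾(x). -/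
open MeasureTheory Real

/-!
A power mean of order `0 < r ≤ 1` lies pointwise between the geometric and the arithmetic mean.
The arithmetic mean of densities is a density, so the upper bound makes the power mean integrable
with total mass `Z ≤ 1`. The lower bound compares logarithms before normalization, and dividing by
`Z ≤ 1` only increases the logarithm.
-/

/-- The power mean of order `r` of the family `a`, with weights `w` on the finite set `s`, which
are meant to be nonnegative and to sum to `1`; uniform weights give the mean `M_{k,r}`. At `r = 0`
the value is the junk `1`, not the geometric mean. -/
noncomputable def powerMean {ι : Type*} (s : Finset ι) (w : ι → ℝ) (r : ℝ) (a : ι → ℝ) : ℝ :=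
  (∑ i ∈ s, w i * a i ^ r) ^ (1 / r)

section Pointwise

variable {ι : Type*} {s : Finset ι} {w a : ι → ℝ} {r : ℝ}

lemma sum_mul_rpow_pos (hw : ∀ i ∈ s, 0 ≤ w i) (hw_sum : ∑ i ∈ s, w i = 1)
    (ha : ∀ i ∈ s, 0 < a i) : 0 < ∑ i ∈ s, w i * a i ^ r :=
  (convex_Ioi (0 : ℝ)).sum_mem hw hw_sum fun i hi => rpow_pos_of_pos (ha i hi) r

lemma powerMean_nonneg (hw : ∀ i ∈ s, 0 ≤ w i) (ha : ∀ i ∈ s, 0 ≤ a i) :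
    0 ≤ powerMean s w r a :=
  rpow_nonneg (Finset.sum_nonneg fun i hi => mul_nonneg (hw i hi) (rpow_nonneg (ha i hi) r)) _

lemma powerMean_pos (hw : ∀ i ∈ s, 0 ≤ w i) (hw_sum : ∑ i ∈ s, w i = 1)
    (ha : ∀ i ∈ s, 0 < a i) : 0 < powerMean s w r a :=
  rpow_pos_of_pos (sum_mul_rpow_pos hw hw_sum ha) _

lemma powerMean_le_sum_mul (hw : ∀ i ∈ s, 0 ≤ w i) (hw_sum : ∑ i ∈ s, w i = 1)
    (ha : ∀ i ∈ s, 0 ≤ a i) (hr0 : 0 < r) (hr1 : r ≤ 1) :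
    powerMean s w r a ≤ ∑ i ∈ s, w i * a i :=
  calc (∑ i ∈ s, w i * a i ^ r) ^ (1 / r)
      ≤ ∑ i ∈ s, w i * (a i ^ r) ^ (1 / r) :=
        rpow_arith_mean_le_arith_mean_rpow s w (fun i => a i ^ r) hw hw_sum
          (fun i hi => rpow_nonneg (ha i hi) r) (one_le_one_div hr0 hr1)
    _ = ∑ i ∈ s, w i * a i := Finset.sum_congr rfl fun i hi => by
        rw [one_div, rpow_rpow_inv (ha i hi) hr0.ne']

lemma sum_mul_log_le_log_powerMean (hw : ∀ i ∈ s, 0 ≤ w i) (hw_sum : ∑ i ∈ s, w i = 1)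
    (ha : ∀ i ∈ s, 0 < a i) (hr0 : 0 < r) :
    ∑ i ∈ s, w i * log (a i) ≤ log (powerMean s w r a) := by
  have jensen : ∑ i ∈ s, w i * log (a i ^ r) ≤ log (∑ i ∈ s, w i * a i ^ r) :=
    strictConcaveOn_log_Ioi.concaveOn.le_map_sum hw hw_sum
      fun i hi => rpow_pos_of_pos (ha i hi) r
  calc ∑ i ∈ s, w i * log (a i)
      = 1 / r * ∑ i ∈ s, w i * log (a i ^ r) := by
        rw [Finset.mul_sum]
        refine Finset.sum_congr rfl fun i hi => ?_
        rw [log_rpow (ha i hi)]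
        field_simp
    _ ≤ 1 / r * log (∑ i ∈ s, w i * a i ^ r) := by gcongr
    _ = log (powerMean s w r a) := (log_rpow (sum_mul_rpow_pos hw hw_sum ha) _).symm

end Pointwise

section Integral

variable {α : Type*} [MeasurableSpace α] {μ : Measure α}

lemma integral_pos_of_forall_pos {f : α → ℝ} (hμ : μ ≠ 0) (hf : Integrable f μ)
    (hpos : ∀ x, 0 < f x) : 0 < ∫ x, f x ∂μ := by
  rw [integral_pos_iff_support_of_nonneg (fun x => (hpos x).le) hf,
    Function.support_eq_univ fun x => (hpos x).ne']
  exact Measure.measure_univ_pos.2 hμ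

variable {ι : Type*} {s : Finset ι} {w : ι → ℝ} {p : ι → α → ℝ} {r : ℝ}

lemma aestronglyMeasurable_powerMean (hp : ∀ i ∈ s, AEMeasurable (p i) μ) :
    AEStronglyMeasurable (fun x => powerMean s w r (p · x)) μ :=
  ((s.aemeasurable_fun_sum fun i hi => ((hp i hi).pow_const r).const_mul (w i)).pow_const
    (1 / r)).aestronglyMeasurable

lemma integrable_sum_mul (hp : ∀ i ∈ s, Integrable (p i) μ) :
    Integrable (fun x => ∑ i ∈ s, w i * p i x) μ :=
  integrable_finsetSum s fun i hi => (hp i hi).const_mul (w i)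

lemma integral_sum_mul (hp : ∀ i ∈ s, Integrable (p i) μ) :
    ∫ x, ∑ i ∈ s, w i * p i x ∂μ = ∑ i ∈ s, w i * ∫ x, p i x ∂μ := by
  rw [integral_finsetSum s fun i hi => (hp i hi).const_mul (w i)]
  simp only [integral_const_mul]

lemma integrable_powerMean (hw : ∀ i ∈ s, 0 ≤ w i) (hw_sum : ∑ i ∈ s, w i = 1)
    (hp : ∀ i ∈ s, Integrable (p i) μ) (hnonneg : ∀ i ∈ s, ∀ x, 0 ≤ p i x)
    (hr0 : 0 < r) (hr1 : r ≤ 1) :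
    Integrable (fun x => powerMean s w r (p · x)) μ := by
  refine (integrable_sum_mul (w := w) hp).mono'
    (aestronglyMeasurable_powerMean fun i hi => (hp i hi).aemeasurable) (.of_forall fun x => ?_)
  have hx : ∀ i ∈ s, 0 ≤ p i x := fun i hi => hnonneg i hi x
  rw [norm_of_nonneg (powerMean_nonneg hw hx)]
  exact powerMean_le_sum_mul hw hw_sum hx hr0 hr1

lemma integral_powerMean_le_sum_mul_integral (hw : ∀ i ∈ s, 0 ≤ w i)
    (hw_sum : ∑ i ∈ s, w i = 1) (hp : ∀ i ∈ s, Integrable (p i) μ)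
    (hnonneg : ∀ i ∈ s, ∀ x, 0 ≤ p i x) (hr0 : 0 < r) (hr1 : r ≤ 1) :
    ∫ x, powerMean s w r (p · x) ∂μ ≤ ∑ i ∈ s, w i * ∫ x, p i x ∂μ :=
  calc ∫ x, powerMean s w r (p · x) ∂μ
      ≤ ∫ x, ∑ i ∈ s, w i * p i x ∂μ :=
        integral_mono (integrable_powerMean hw hw_sum hp hnonneg hr0 hr1) (integrable_sum_mul hp)
          fun x => powerMean_le_sum_mul hw hw_sum (fun i hi => hnonneg i hi x) hr0 hr1
    _ = ∑ i ∈ s, w i * ∫ x, p i x ∂μ := integral_sum_mul hp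

theorem wisdom_of_crowds_log_likelihood_general
    (hw : ∀ i ∈ s, 0 ≤ w i) (hw_sum : ∑ i ∈ s, w i = 1)
    (hpos : ∀ i ∈ s, ∀ x, 0 < p i x) (hint : ∀ i ∈ s, ∫ x, p i x ∂μ = 1)
    (hr0 : 0 < r) (hr1 : r ≤ 1) :
    0 < ∫ x, powerMean s w r (p · x) ∂μ ∧
    ∫ x, powerMean s w r (p · x) ∂μ ≤ 1 ∧
    ∀ x, ∑ i ∈ s, w i * log (p i x) ≤
      log (powerMean s w r (p · x) / ∫ y, powerMean s w r (p · y) ∂μ) := by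
  have hp : ∀ i ∈ s, Integrable (p i) μ := fun i hi => integrable_of_integral_eq_one (hint i hi)
  have hnonneg : ∀ i ∈ s, ∀ x, 0 ≤ p i x := fun i hi x => (hpos i hi x).le
  have hM_pos : ∀ x, 0 < powerMean s w r (p · x) := fun x =>
    powerMean_pos hw hw_sum fun i hi => hpos i hi x
  have hsum_integral : ∑ i ∈ s, w i * ∫ x, p i x ∂μ = 1 := by
    rw [← hw_sum]
    exact Finset.sum_congr rfl fun i hi => by rw [hint i hi, mul_one]
  have hμ : μ ≠ 0 := by
    rintro rfl
    simp at hsum_integral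
  have hZ_pos : 0 < ∫ x, powerMean s w r (p · x) ∂μ :=
    integral_pos_of_forall_pos hμ (integrable_powerMean hw hw_sum hp hnonneg hr0 hr1) hM_pos
  have hZ_le_one : ∫ x, powerMean s w r (p · x) ∂μ ≤ 1 :=
    (integral_powerMean_le_sum_mul_integral hw hw_sum hp hnonneg hr0 hr1).trans_eq hsum_integral
  refine ⟨hZ_pos, hZ_le_one, fun x => ?_⟩
  calc ∑ i ∈ s, w i * log (p i x)
      ≤ log (powerMean s w r (p · x)) :=
        sum_mul_log_le_log_powerMean hw hw_sum (fun i hi => hpos i hi x) hr0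
    _ ≤ log (powerMean s w r (p · x) / ∫ y, powerMean s w r (p · y) ∂μ) :=
        log_le_log (hM_pos x) (le_div_self (hM_pos x).le hZ_pos hZ_le_one)

end Integral

/-- Wisdom of Crowds on log-likelihood, case `0 < r ≤ 1`: the normalization constant
`Z_{k,r}` satisfies `0 < Z_{k,r} ≤ 1` and the log of the normalized power mean density
dominates the average individual log-likelihood at every point. -/
theorem wisdom_of_crowds_log_likelihood
    (d k : ℕ) (hd : 1 ≤ d) (hk : 1 ≤ k)
    (p : Fin k → (Fin d → ℝ) → ℝ)
    (hmeas : ∀ i, Measurable (p i))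
    (hpos : ∀ i x, 0 < p i x)
    (hint : ∀ i, (∫ x, p i x) = 1)
    (r : ℝ) (hr0 : 0 < r) (hr1 : r ≤ 1) :
    0 < (∫ x, ((1 / (k : ℝ)) * ∑ i, p i x ^ r) ^ (1 / r)) ∧
    (∫ x, ((1 / (k : ℝ)) * ∑ i, p i x ^ r) ^ (1 / r)) ≤ 1 ∧
    ∀ x : Fin d → ℝ,
      Real.log ((((1 / (k : ℝ)) * ∑ i, p i x ^ r) ^ (1 / r)) /
          (∫ y, ((1 / (k : ℝ)) * ∑ i, p i y ^ r) ^ (1 / r)))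
        ≥ (1 / (k : ℝ)) * ∑ i, Real.log (p i x) := by
  have hw_sum : ∑ _i : Fin k, 1 / (k : ℝ) = 1 := by simp [Nat.ne_of_gt hk]
  simpa only [powerMean, ← Finset.mul_sum] using
    wisdom_of_crowds_log_likelihood_general (μ := volume) (w := fun _ => 1 / (k : ℝ))
      (fun _ _ => by positivity) hw_sum (fun i _ => hpos i) (fun i _ => hint i) hr0 hr1
end

section
/- (Wisdom of Crowds on log-likelihood, finite classification setting.) Let L ≥ 1, k ≥ 1, and let p⁽¹⁾, …, p⁽ᵏ⁾ : Fin L → ℝ be strictly positive probability vectors, i.e. p⁽ⁱ⁾(y) > 0 for all y and Σ_{y=1}^L p⁽ⁱ⁾(y) = 1 for each i. Let r be a real number with 0 < r ≤ 1, and define M(y) = ((1/k) · Σ_{i=1}^k p⁽ⁱ⁾(y)^r)^{1/r} and Z = Σ_{y=1}^L M(y). Then for every class y: log(M(y)/Z) ≥ (1/k) · Σ_{i=1}^k log p⁽ⁱ⁾(y). -/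
/-!
Write `M z` for the power mean of order `r` at the class `z`, and `Z` for the sum of all `M z`.
The order satisfies `0 < r ≤ 1`, so power means lie between the geometric and the arithmetic mean.
The upper bound, summed over the classes, gives `Z ≤ 1`, so normalizing can only increase the
mean: `M y / Z ≥ M y`. The lower bound says that the logarithm of `M y` is at least the average of
the logarithms.
-/

open Real

section WeightedPowerMean

variable {ι κ : Type*} {s : Finset ι} {w x : ι → ℝ} {r q : ℝ}

/-- The power mean of order `r` of the values `x i`, `i ∈ s`, with weights `w i`. The weights are
not normalized here, and order `0` yields the value `1` rather than the geometric mean. -/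
noncomputable def weightedPowerMean (s : Finset ι) (w : ι → ℝ) (r : ℝ) (x : ι → ℝ) : ℝ :=
  (∑ i ∈ s, w i * x i ^ r) ^ (1 / r)

lemma weightedPowerMean_one : weightedPowerMean s w 1 x = ∑ i ∈ s, w i * x i := by
  simp [weightedPowerMean]

lemma weightedPowerMean_nonneg (hw : ∀ i ∈ s, 0 ≤ w i) (hx : ∀ i ∈ s, 0 ≤ x i) :
    0 ≤ weightedPowerMean s w r x :=
  rpow_nonneg (Finset.sum_nonneg fun i hi => mul_nonneg (hw i hi) (rpow_nonneg (hx i hi) r)) _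

lemma weightedPowerMean_le_weightedPowerMean (hw : ∀ i ∈ s, 0 ≤ w i) (hw₁ : ∑ i ∈ s, w i = 1)
    (hx : ∀ i ∈ s, 0 ≤ x i) (hr : 0 < r) (hrq : r ≤ q) :
    weightedPowerMean s w r x ≤ weightedPowerMean s w q x := by
  have hq : 0 < q := hr.trans_le hrq
  have hsum : 0 ≤ ∑ i ∈ s, w i * x i ^ r :=
    Finset.sum_nonneg fun i hi => mul_nonneg (hw i hi) (rpow_nonneg (hx i hi) r)
  have hjensen : (∑ i ∈ s, w i * x i ^ r) ^ (q / r) ≤ ∑ i ∈ s, w i * x i ^ q :=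
    calc (∑ i ∈ s, w i * x i ^ r) ^ (q / r)
        ≤ ∑ i ∈ s, w i * (x i ^ r) ^ (q / r) :=
          rpow_arith_mean_le_arith_mean_rpow s w _ hw hw₁ (fun i hi => rpow_nonneg (hx i hi) r)
            ((one_le_div hr).2 hrq)
      _ = ∑ i ∈ s, w i * x i ^ q :=
          Finset.sum_congr rfl fun i hi => by
            rw [← rpow_mul (hx i hi), mul_div_cancel₀ q hr.ne']
  calc weightedPowerMean s w r x
      = ((∑ i ∈ s, w i * x i ^ r) ^ (q / r)) ^ (1 / q) := by
        rw [← rpow_mul hsum, weightedPowerMean]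
        congr 1
        field_simp
    _ ≤ weightedPowerMean s w q x :=
        rpow_le_rpow (rpow_nonneg hsum _) hjensen (one_div_pos.2 hq).le

lemma weightedPowerMean_le_sum (hw : ∀ i ∈ s, 0 ≤ w i) (hw₁ : ∑ i ∈ s, w i = 1)
    (hx : ∀ i ∈ s, 0 ≤ x i) (hr₀ : 0 < r) (hr₁ : r ≤ 1) :
    weightedPowerMean s w r x ≤ ∑ i ∈ s, w i * x i :=
  (weightedPowerMean_le_weightedPowerMean hw hw₁ hx hr₀ hr₁).trans_eq weightedPowerMean_one

lemma prod_rpow_le_weightedPowerMean (hw : ∀ i ∈ s, 0 ≤ w i) (hw₁ : ∑ i ∈ s, w i = 1)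
    (hx : ∀ i ∈ s, 0 ≤ x i) (hr : 0 < r) :
    ∏ i ∈ s, x i ^ w i ≤ weightedPowerMean s w r x := by
  have hgeom : 0 ≤ ∏ i ∈ s, x i ^ w i :=
    Finset.prod_nonneg fun i hi => rpow_nonneg (hx i hi) (w i)
  have hamgm : (∏ i ∈ s, x i ^ w i) ^ r ≤ ∑ i ∈ s, w i * x i ^ r :=
    calc (∏ i ∈ s, x i ^ w i) ^ r
        = ∏ i ∈ s, (x i ^ r) ^ w i := by
          rw [← finsetProd_rpow s _ fun i hi => rpow_nonneg (hx i hi) (w i)]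
          exact Finset.prod_congr rfl fun i hi => by
            rw [← rpow_mul (hx i hi), ← rpow_mul (hx i hi), mul_comm]
      _ ≤ ∑ i ∈ s, w i * x i ^ r :=
          geom_mean_le_arith_mean_weighted s w _ hw hw₁ fun i hi => rpow_nonneg (hx i hi) r
  rw [weightedPowerMean, one_div]
  exact (le_rpow_inv_iff_of_pos hgeom ((rpow_nonneg hgeom r).trans hamgm) hr).2 hamgm

lemma sum_mul_log_eq_log_prod_rpow (hx : ∀ i ∈ s, 0 < x i) :
    ∑ i ∈ s, w i * log (x i) = log (∏ i ∈ s, x i ^ w i) := by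
  rw [log_prod fun i hi => (rpow_pos_of_pos (hx i hi) _).ne']
  exact Finset.sum_congr rfl fun i hi => (log_rpow (hx i hi) _).symm

section Pooling

variable {p : ι → κ → ℝ}

lemma summable_weightedPowerMean (hw : ∀ i ∈ s, 0 ≤ w i) (hw₁ : ∑ i ∈ s, w i = 1)
    (hp₀ : ∀ i ∈ s, ∀ z, 0 ≤ p i z) (hp : ∀ i ∈ s, Summable (p i)) (hr₀ : 0 < r) (hr₁ : r ≤ 1) :
    Summable fun z => weightedPowerMean s w r (p · z) :=
  .of_nonneg_of_le (fun z => weightedPowerMean_nonneg hw fun i hi => hp₀ i hi z)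
    (fun z => weightedPowerMean_le_sum hw hw₁ (fun i hi => hp₀ i hi z) hr₀ hr₁)
    (summable_sum fun i hi => (hp i hi).mul_left (w i))

lemma tsum_weightedPowerMean_le (hw : ∀ i ∈ s, 0 ≤ w i) (hw₁ : ∑ i ∈ s, w i = 1)
    (hp₀ : ∀ i ∈ s, ∀ z, 0 ≤ p i z) (hp : ∀ i ∈ s, Summable (p i)) (hr₀ : 0 < r) (hr₁ : r ≤ 1) :
    ∑' z, weightedPowerMean s w r (p · z) ≤ ∑ i ∈ s, w i * ∑' z, p i z := by
  have hwp : ∀ i ∈ s, Summable fun z => w i * p i z := fun i hi => (hp i hi).mul_left (w i)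
  calc ∑' z, weightedPowerMean s w r (p · z)
      ≤ ∑' z, ∑ i ∈ s, w i * p i z :=
        (summable_weightedPowerMean hw hw₁ hp₀ hp hr₀ hr₁).tsum_le_tsum
          (fun z => weightedPowerMean_le_sum hw hw₁ (fun i hi => hp₀ i hi z) hr₀ hr₁)
          (summable_sum hwp)
    _ = ∑ i ∈ s, w i * ∑' z, p i z := by
        simp only [Summable.tsum_finsetSum hwp, tsum_mul_left]

theorem wisdom_of_crowds_classification_general
    (hw : ∀ i ∈ s, 0 ≤ w i) (hw₁ : ∑ i ∈ s, w i = 1)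
    (hp₀ : ∀ i ∈ s, ∀ z, 0 ≤ p i z) (hp : ∀ i ∈ s, Summable (p i))
    (hp₁ : ∀ i ∈ s, ∑' z, p i z ≤ 1) (hr₀ : 0 < r) (hr₁ : r ≤ 1)
    {y : κ} (hy : ∀ i ∈ s, 0 < p i y) :
    ∑ i ∈ s, w i * log (p i y) ≤
      log (weightedPowerMean s w r (p · y) / ∑' z, weightedPowerMean s w r (p · z)) := by
  set M : κ → ℝ := fun z => weightedPowerMean s w r (p · z)
  have hgeom : 0 < ∏ i ∈ s, p i y ^ w i :=
    Finset.prod_pos fun i hi => rpow_pos_of_pos (hy i hi) _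
  have hgeom_le : ∏ i ∈ s, p i y ^ w i ≤ M y :=
    prod_rpow_le_weightedPowerMean hw hw₁ (fun i hi => hp₀ i hi y) hr₀
  have hM : 0 < M y := hgeom.trans_le hgeom_le
  have hZ_pos : 0 < ∑' z, M z :=
    (summable_weightedPowerMean hw hw₁ hp₀ hp hr₀ hr₁).tsum_pos
      (fun z => weightedPowerMean_nonneg hw fun i hi => hp₀ i hi z) y hM
  have hZ_le_one : ∑' z, M z ≤ 1 :=
    calc ∑' z, M z
        ≤ ∑ i ∈ s, w i * ∑' z, p i z := tsum_weightedPowerMean_le hw hw₁ hp₀ hp hr₀ hr₁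
      _ ≤ ∑ i ∈ s, w i :=
          Finset.sum_le_sum fun i hi => mul_le_of_le_one_right (hw i hi) (hp₁ i hi)
      _ = 1 := hw₁
  rw [sum_mul_log_eq_log_prod_rpow hy]
  exact log_le_log hgeom (hgeom_le.trans (le_div_self hM.le hZ_pos hZ_le_one))

end Pooling

end WeightedPowerMean

/-- Wisdom of Crowds on log-likelihood in the finite classification setting: for
`0 < r ≤ 1`, the log of the normalized generalized power mean of `k` strictly positive
probability vectors dominates the average individual log-likelihood at every class. -/
theorem wisdom_of_crowds_classification
    (L k : ℕ) (hL : 1 ≤ L) (hk : 1 ≤ k)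
    (p : Fin k → Fin L → ℝ)
    (hpos : ∀ i y, 0 < p i y)
    (hsum : ∀ i, (∑ y, p i y) = 1)
    (r : ℝ) (hr0 : 0 < r) (hr1 : r ≤ 1) (y : Fin L) :
    Real.log ((((1 / (k : ℝ)) * ∑ i, p i y ^ r) ^ (1 / r)) /
        (∑ z, ((1 / (k : ℝ)) * ∑ i, p i z ^ r) ^ (1 / r)))
      ≥ (1 / (k : ℝ)) * ∑ i, Real.log (p i y) := by
  have hw₁ : ∑ _i : Fin k, 1 / (k : ℝ) = 1 := by simp [Nat.one_le_iff_ne_zero.1 hk]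
  simpa only [weightedPowerMean, ← Finset.mul_sum, tsum_fintype] using
    wisdom_of_crowds_classification_general (fun _ _ => by positivity) hw₁
      (fun i _ z => (hpos i z).le) (fun _ _ => .of_finite)
      (fun i _ => (tsum_fintype (p i)).trans_le (hsum i).le) hr0 hr1 (fun i _ => hpos i y)
end

section
/- (Failure of the Wisdom of Crowds.) For every real number r with r < 0 or r > 1, there exist two strictly positive probability densities p⁽¹⁾ ≠ p⁽²⁾ on ℝ (measurable, strictly positive, each integrating to 1 with respect to Lebesgue measure) and a point x ∈ ℝ such that log(M_{2,r}(x)/Z_{2,r}) < (1/2) · (log p⁽¹⁾(x) + log p⁽²⁾(x)), where M_{2,r}(x) = ((1/2)(p⁽¹⁾(x)^r + p⁽²⁾(x)^r))^{1/r} and Z_{2,r} = ∫_ℝ M_{2,r}(x) dx. -/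
open MeasureTheory Real

/-!
At a point `x` the inequality says that the power mean `M x` of the two densities is below
`Z * √(p₁ x * p₂ x)`, where `Z` is the integral of `M`.

* For `1 < r`, strict convexity makes `M` larger than the arithmetic mean wherever the densities
  differ, so `1 < Z`. Two continuous densities on a connected space cross, having the same
  integral, and at a crossing point `M x = √(p₁ x * p₂ x)`.
* For `r < 0`, `M` is at most a constant times the smaller of the two densities. Hence
  `M x / √(p₁ x * p₂ x)` gets below the positive number `Z` as soon as the ratio `p₂ x / p₁ x`
  gets close enough to `0`.

Two Gaussian densities with a common variance and distinct means satisfy both requirements, so the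
same pair is a counterexample for every order.
-/

namespace WisdomOfCrowds

/-- The power mean of order `r` of two numbers with equal weights, written `M_{2,r}` in the paper
when applied pointwise to two densities. For `r = 0` its value is `1`, not the geometric mean. -/
noncomputable def powerMean (r u v : ℝ) : ℝ := ((1 / 2) * (u ^ r + v ^ r)) ^ (1 / r)

/-- The pointwise power mean of two densities with respect to `μ`, divided by its integral: the
normalized generalized mean density of the paper. It is a density only when that integral is
neither zero nor the junk value for a non-integrable function. -/
noncomputable def normalizedPowerMean {α : Type*} [MeasurableSpace α] (μ : Measure α) (r : ℝ)
    (p₁ p₂ : α → ℝ) (x : α) : ℝ :=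
  powerMean r (p₁ x) (p₂ x) / ∫ y, powerMean r (p₁ y) (p₂ y) ∂μ

section PowerMean

variable {r u v : ℝ}

lemma powerMean_pos (hu : 0 < u) (hv : 0 < v) : 0 < powerMean r u v := by
  unfold powerMean
  positivity

lemma powerMean_self (hr : r ≠ 0) (hu : 0 ≤ u) : powerMean r u u = u := by
  rw [powerMean, ← two_mul, ← mul_assoc, one_div_mul_cancel two_ne_zero, one_mul, one_div,
    rpow_rpow_inv hu hr]

lemma powerMean_le_max (hr : r ≠ 0) (hu : 0 < u) (hv : 0 < v) : powerMean r u v ≤ max u v := by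
  have hm : 0 < max u v := lt_max_of_lt_left hu
  rw [← powerMean_self hr hm.le]
  rcases hr.lt_or_gt with hr | hr
  · refine rpow_le_rpow_of_nonpos (by positivity) ?_ (one_div_neg.2 hr).le
    gcongr ?_ * (?_ + ?_)
    · exact rpow_le_rpow_of_nonpos hu (le_max_left u v) hr.le
    · exact rpow_le_rpow_of_nonpos hv (le_max_right u v) hr.le
  · unfold powerMean
    gcongr
    exacts [le_max_left u v, le_max_right u v]

lemma arith_mean_lt_powerMean (hr : 1 < r) (hu : 0 ≤ u) (hv : 0 ≤ v) (huv : u ≠ v) :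
    (1 / 2) * (u + v) < powerMean r u v := by
  have hconv : ((1 / 2) * (u + v)) ^ r < (1 / 2) * (u ^ r + v ^ r) := by
    simpa only [smul_eq_mul, ← mul_add] using
      (strictConvexOn_rpow hr).2 hu hv huv one_half_pos one_half_pos (add_halves 1)
  rw [powerMean, one_div r]
  exact (lt_rpow_inv_iff_of_pos (by positivity) (by positivity) (by linarith)).2 hconv

lemma arith_mean_le_powerMean (hr : 1 < r) (hu : 0 ≤ u) (hv : 0 ≤ v) :
    (1 / 2) * (u + v) ≤ powerMean r u v := by
  obtain rfl | huv := eq_or_ne u v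
  · rw [powerMean_self (by linarith) hu]
    linarith
  · exact (arith_mean_lt_powerMean hr hu hv huv).le

lemma powerMean_le_const_mul_right (hr : r < 0) (hu : 0 < u) (hv : 0 < v) :
    powerMean r u v ≤ (1 / 2) ^ (1 / r) * v :=
  calc
    powerMean r u v ≤ ((1 / 2) * v ^ r) ^ (1 / r) := by
      refine rpow_le_rpow_of_nonpos (by positivity) ?_ (one_div_neg.2 hr).le
      gcongr
      exact le_add_of_nonneg_left (by positivity)
    _ = (1 / 2) ^ (1 / r) * v := by
      rw [mul_rpow (by positivity) (by positivity), one_div r, rpow_rpow_inv hv.le hr.ne]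

end PowerMean

lemma ne_of_forall_exists_lt_mul {α : Type*} {p₁ p₂ : α → ℝ}
    (hratio : ∀ ε > 0, ∃ x, p₂ x < ε * p₁ x) : p₁ ≠ p₂ := by
  rintro rfl
  obtain ⟨x, hx⟩ := hratio 1 one_pos
  exact (one_mul (p₁ x)).not_gt hx

lemma exists_powerMean_lt_mul_sqrt {α : Type*} {p₁ p₂ : α → ℝ} {r c : ℝ} (hr : r < 0)
    (hc : 0 < c) (h₁ : ∀ x, 0 < p₁ x) (h₂ : ∀ x, 0 < p₂ x)
    (hratio : ∀ ε > 0, ∃ x, p₂ x < ε * p₁ x) :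
    ∃ x, powerMean r (p₁ x) (p₂ x) < c * √(p₁ x * p₂ x) := by
  set K : ℝ := (1 / 2) ^ (1 / r)
  have hK : 0 < K := by positivity
  obtain ⟨x, hx⟩ := hratio ((c / K) ^ 2) (by positivity)
  have hsqrt : p₂ x < c / K * √(p₁ x * p₂ x) := by
    rw [← sqrt_sq (show 0 ≤ c / K by positivity), ← sqrt_mul (sq_nonneg _)]
    apply lt_sqrt_of_sq_lt
    rw [sq (p₂ x), ← mul_assoc]
    exact mul_lt_mul_of_pos_right hx (h₂ x)
  refine ⟨x, (powerMean_le_const_mul_right hr (h₁ x) (h₂ x)).trans_lt ?_⟩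
  calc
    K * p₂ x < K * (c / K * √(p₁ x * p₂ x)) := by gcongr
    _ = c * √(p₁ x * p₂ x) := by field_simp

section Integral

variable {α : Type*} [MeasurableSpace α] {μ : Measure α} {p₁ p₂ : α → ℝ} {r : ℝ}

lemma integrable_powerMean (hr : r ≠ 0) (h₁ : ∀ x, 0 < p₁ x) (h₂ : ∀ x, 0 < p₂ x)
    (hi₁ : Integrable p₁ μ) (hi₂ : Integrable p₂ μ) :
    Integrable (fun x ↦ powerMean r (p₁ x) (p₂ x)) μ := by
  refine (hi₁.sup hi₂).mono' ?_ (.of_forall fun x ↦ ?_)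
  · exact (((hi₁.aemeasurable.pow_const r).add (hi₂.aemeasurable.pow_const r)).const_mul
      (1 / 2)).pow_const (1 / r) |>.aestronglyMeasurable
  · rw [norm_of_nonneg (powerMean_pos (h₁ x) (h₂ x)).le]
    exact powerMean_le_max hr (h₁ x) (h₂ x)

lemma integral_powerMean_pos [NeZero μ] (hr : r ≠ 0) (h₁ : ∀ x, 0 < p₁ x) (h₂ : ∀ x, 0 < p₂ x)
    (hi₁ : Integrable p₁ μ) (hi₂ : Integrable p₂ μ) :
    0 < ∫ x, powerMean r (p₁ x) (p₂ x) ∂μ := by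
  have hpos : ∀ x, 0 < powerMean r (p₁ x) (p₂ x) := fun x ↦ powerMean_pos (h₁ x) (h₂ x)
  rw [integral_pos_iff_support_of_nonneg (fun x ↦ (hpos x).le)
    (integrable_powerMean hr h₁ h₂ hi₁ hi₂), Function.support_eq_univ fun x ↦ (hpos x).ne']
  exact NeZero.pos (μ Set.univ)

lemma integral_arith_mean_lt_integral_powerMean (hr : 1 < r) (h₁ : ∀ x, 0 < p₁ x)
    (h₂ : ∀ x, 0 < p₂ x) (hi₁ : Integrable p₁ μ) (hi₂ : Integrable p₂ μ) (hne : ¬ p₁ =ᵐ[μ] p₂) :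
    (1 / 2) * (∫ x, p₁ x ∂μ + ∫ x, p₂ x ∂μ) < ∫ x, powerMean r (p₁ x) (p₂ x) ∂μ := by
  have hle : ∀ x, (1 / 2) * (p₁ x + p₂ x) ≤ powerMean r (p₁ x) (p₂ x) := fun x ↦
    arith_mean_le_powerMean hr (h₁ x).le (h₂ x).le
  have hiA : Integrable (fun x ↦ (1 / 2) * (p₁ x + p₂ x)) μ := (hi₁.add hi₂).const_mul _
  have hiM := integrable_powerMean (by linarith) h₁ h₂ hi₁ hi₂ (r := r)
  rw [← integral_add hi₁ hi₂, ← integral_const_mul]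
  refine (integral_mono hiA hiM hle).lt_of_ne fun heq ↦ hne ?_
  filter_upwards [(integral_eq_iff_of_ae_le hiA hiM (.of_forall hle)).1 heq] with x hx
  by_contra hx'
  exact (arith_mean_lt_powerMean hr (h₁ x).le (h₂ x).le hx').ne hx

lemma log_normalizedPowerMean_lt {x : α} (h₁ : 0 < p₁ x) (h₂ : 0 < p₂ x)
    (h : powerMean r (p₁ x) (p₂ x) <
      (∫ y, powerMean r (p₁ y) (p₂ y) ∂μ) * √(p₁ x * p₂ x)) :
    log (normalizedPowerMean μ r p₁ p₂ x) < (1 / 2) * (log (p₁ x) + log (p₂ x)) := by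
  have hM : 0 < powerMean r (p₁ x) (p₂ x) := powerMean_pos h₁ h₂
  have hZ : 0 < ∫ y, powerMean r (p₁ y) (p₂ y) ∂μ :=
    pos_of_mul_pos_left (hM.trans h) (sqrt_nonneg _)
  calc
    log (normalizedPowerMean μ r p₁ p₂ x) < log √(p₁ x * p₂ x) :=
      log_lt_log (div_pos hM hZ) ((div_lt_iff₀' hZ).2 h)
    _ = (1 / 2) * (log (p₁ x) + log (p₂ x)) := by
      rw [log_sqrt (by positivity), log_mul h₁.ne' h₂.ne', div_eq_inv_mul, one_div]

lemma exists_le_of_integral_le [NeZero μ] {f g : α → ℝ} (hf : Integrable f μ)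
    (hg : Integrable g μ) (h : ∫ x, f x ∂μ ≤ ∫ x, g x ∂μ) : ∃ x, f x ≤ g x := by
  by_contra! hlt
  have heq : g =ᵐ[μ] f := (integral_eq_iff_of_ae_le hg hf (.of_forall fun x ↦ (hlt x).le)).1
    ((integral_mono hg hf fun x ↦ (hlt x).le).antisymm h)
  obtain ⟨x, hx⟩ := heq.exists
  exact (hlt x).ne hx

lemma exists_eq_of_integral_eq [TopologicalSpace α] [PreconnectedSpace α] [NeZero μ] {f g : α → ℝ}
    (hf : Continuous f) (hg : Continuous g) (hfi : Integrable f μ) (hgi : Integrable g μ)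
    (h : ∫ x, f x ∂μ = ∫ x, g x ∂μ) : ∃ x, f x = g x := by
  obtain ⟨a, ha⟩ := exists_le_of_integral_le hfi hgi h.le
  obtain ⟨b, hb⟩ := exists_le_of_integral_le hgi hfi h.ge
  exact intermediate_value_univ₂ hf hg ha hb

end Integral

section Gaussian

open ProbabilityTheory Filter
open scoped NNReal Topology

lemma continuous_gaussianPDFReal (m : ℝ) (v : ℝ≥0) : Continuous (gaussianPDFReal m v) := by
  rw [gaussianPDFReal_def]
  fun_prop

lemma gaussianPDFReal_div_gaussianPDFReal (m₁ m₂ : ℝ) {v : ℝ≥0} (hv : v ≠ 0) (x : ℝ) :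
    gaussianPDFReal m₁ v x / gaussianPDFReal m₂ v x =
      exp ((m₁ - m₂) / v * (x - (m₁ + m₂) / 2)) := by
  have : 0 < (v : ℝ) := NNReal.coe_pos.2 (pos_iff_ne_zero.2 hv)
  rw [gaussianPDFReal, gaussianPDFReal, mul_div_mul_left _ _ (by positivity), ← exp_sub]
  congr 1
  field_simp
  ring

lemma tendsto_gaussianPDFReal_div_atTop {m₁ m₂ : ℝ} (hm : m₁ < m₂) {v : ℝ≥0} (hv : v ≠ 0) :
    Tendsto (fun x ↦ gaussianPDFReal m₁ v x / gaussianPDFReal m₂ v x) atTop (𝓝 0) := by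
  have hneg : (m₁ - m₂) / v < 0 :=
    div_neg_of_neg_of_pos (sub_neg.2 hm) (NNReal.coe_pos.2 (pos_iff_ne_zero.2 hv))
  simp only [gaussianPDFReal_div_gaussianPDFReal m₁ m₂ hv]
  exact tendsto_exp_atBot.comp
    ((tendsto_atTop_add_const_right atTop _ tendsto_id).const_mul_atTop_of_neg hneg)

lemma exists_gaussianPDFReal_lt_mul {m₁ m₂ : ℝ} (hm : m₁ < m₂) {v : ℝ≥0} (hv : v ≠ 0) :
    ∀ ε > 0, ∃ x, gaussianPDFReal m₁ v x < ε * gaussianPDFReal m₂ v x := fun _ hε ↦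
  let ⟨x, hx⟩ := ((tendsto_gaussianPDFReal_div_atTop hm hv).eventually_lt_const hε).exists
  ⟨x, (div_lt_iff₀ (gaussianPDFReal_pos m₂ v x hv)).1 hx⟩

end Gaussian

end WisdomOfCrowds

open WisdomOfCrowds in
theorem failure_of_wisdom_of_crowds_general {X : Type*} [TopologicalSpace X] [PreconnectedSpace X]
    [MeasurableSpace X] {μ : Measure X} [μ.IsOpenPosMeasure] {p₁ p₂ : X → ℝ}
    (hc₁ : Continuous p₁) (hc₂ : Continuous p₂) (h₁ : ∀ x, 0 < p₁ x) (h₂ : ∀ x, 0 < p₂ x)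
    (hint₁ : ∫ x, p₁ x ∂μ = 1) (hint₂ : ∫ x, p₂ x ∂μ = 1)
    (hratio : ∀ ε > 0, ∃ x, p₂ x < ε * p₁ x) {r : ℝ} (hr : r < 0 ∨ 1 < r) :
    ∃ x, log (normalizedPowerMean μ r p₁ p₂ x) < (1 / 2) * (log (p₁ x) + log (p₂ x)) := by
  have : NeZero μ := ⟨by rintro rfl; simp at hint₁⟩
  have hi₁ : Integrable p₁ μ := integrable_of_integral_eq_one hint₁
  have hi₂ : Integrable p₂ μ := integrable_of_integral_eq_one hint₂
  suffices ∃ x, powerMean r (p₁ x) (p₂ x) <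
      (∫ y, powerMean r (p₁ y) (p₂ y) ∂μ) * √(p₁ x * p₂ x) from
    this.imp fun x hx ↦ log_normalizedPowerMean_lt (h₁ x) (h₂ x) hx
  rcases hr with hr | hr
  · exact exists_powerMean_lt_mul_sqrt hr (integral_powerMean_pos hr.ne h₁ h₂ hi₁ hi₂) h₁ h₂ hratio
  · obtain ⟨x, hx⟩ := exists_eq_of_integral_eq hc₁ hc₂ hi₁ hi₂ (hint₁.trans hint₂.symm)
    have hne : ¬ p₁ =ᵐ[μ] p₂ :=
      mt (hc₁.ae_eq_iff_eq μ hc₂).1 (ne_of_forall_exists_lt_mul hratio)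
    have hZ : 1 < ∫ y, powerMean r (p₁ y) (p₂ y) ∂μ := by
      linarith [integral_arith_mean_lt_integral_powerMean hr h₁ h₂ hi₁ hi₂ hne]
    refine ⟨x, ?_⟩
    rw [← hx, powerMean_self (by linarith) (h₁ x).le, sqrt_mul_self (h₁ x).le]
    exact lt_mul_of_one_lt_left (h₁ x) hZ

open WisdomOfCrowds ProbabilityTheory in
/-- Failure of the Wisdom of Crowds: for every order `r ∉ [0,1]` there exist two distinct
strictly positive probability densities on `ℝ` and a point where the log of the normalized
power mean density falls strictly below the average individual log-likelihood. -/
theorem failure_of_wisdom_of_crowds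
    (r : ℝ) (hr : r < 0 ∨ 1 < r) :
    ∃ p₁ p₂ : ℝ → ℝ,
      Measurable p₁ ∧ Measurable p₂ ∧
      (∀ x, 0 < p₁ x) ∧ (∀ x, 0 < p₂ x) ∧
      (∫ x, p₁ x) = 1 ∧ (∫ x, p₂ x) = 1 ∧
      p₁ ≠ p₂ ∧
      ∃ x : ℝ,
        Real.log ((((1 / 2) * (p₁ x ^ r + p₂ x ^ r)) ^ (1 / r)) /
            (∫ y, ((1 / 2) * (p₁ y ^ r + p₂ y ^ r)) ^ (1 / r)))
          < (1 / 2) * (Real.log (p₁ x) + Real.log (p₂ x)) := by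
  have hpos (m x : ℝ) := gaussianPDFReal_pos m 1 x one_ne_zero
  have hint (m : ℝ) := integral_gaussianPDFReal_eq_one m (one_ne_zero (α := NNReal))
  have hratio := exists_gaussianPDFReal_lt_mul one_pos (one_ne_zero (α := NNReal))
  exact ⟨gaussianPDFReal 1 1, gaussianPDFReal 0 1, measurable_gaussianPDFReal 1 1,
    measurable_gaussianPDFReal 0 1, hpos 1, hpos 0, hint 1, hint 0,
    ne_of_forall_exists_lt_mul hratio,
    failure_of_wisdom_of_crowds_general (continuous_gaussianPDFReal 1 1)
      (continuous_gaussianPDFReal 0 1) (hpos 1) (hpos 0) (hint 1) (hint 0) hratio hr⟩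
end

section
/- For each fixed real number r < 0, the function m ↦ (1/r) · log((1/2) · (1 + exp(−2·r·m²))) + m² tends to −∞ as m → +∞. -/
open Real Filter

/-!
For `r < 0` a power mean of order `r` is at most a constant multiple of its smallest entry. At
`x = m` that entry is `φ_{-m}(m) = φ_m(m) · exp (-2m²)`, whose logarithm lies `2m²` below
`log φ_m(m)`, whereas the average of the two log-densities lies only `m²` below it. Hence the gap is
at most `-m²` up to an additive constant.
-/

theorem log_add_le_log_add_mul_exp {u w : ℝ} (hu : 0 ≤ u) (hw : 0 < w) (x : ℝ) :
    log w + x ≤ log (u + w * exp x) :=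
  calc
    log w + x = log (w * exp x) := by rw [log_mul hw.ne' (exp_ne_zero x), log_exp]
    _ ≤ log (u + w * exp x) := log_le_log (by positivity) (le_add_of_nonneg_left hu)

theorem one_div_mul_log_add_mul_exp_le {r u w : ℝ} (hr : r < 0) (hu : 0 ≤ u) (hw : 0 < w) (x : ℝ) :
    1 / r * log (u + w * exp (r * x)) ≤ 1 / r * log w + x :=
  calc
    1 / r * log (u + w * exp (r * x)) ≤ 1 / r * (log w + r * x) :=
      mul_le_mul_of_nonpos_left (log_add_le_log_add_mul_exp hu hw (r * x)) (one_div_neg.mpr hr).le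
    _ = 1 / r * log w + x := by rw [mul_add, ← mul_assoc, one_div_mul_cancel hr.ne, one_mul]

/-- For each fixed `r < 0`, the gap
`(1/r) · log((1/2)(1 + exp(-2·r·m²))) + m²` tends to `-∞` as `m → +∞`. -/
theorem gap_tendsto_atBot (r : ℝ) (hr : r < 0) :
    Tendsto (fun m : ℝ => (1 / r) * Real.log ((1 / 2) * (1 + Real.exp (-2 * r * m ^ 2))) + m ^ 2)
      atTop atBot := by
  have tendsto_bound : Tendsto (fun m : ℝ => 1 / r * log (1 / 2) + -m ^ 2) atTop atBot :=
    tendsto_atBot_add_const_left _ _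
      (tendsto_neg_atTop_atBot.comp (tendsto_pow_atTop two_ne_zero))
  refine tendsto_atBot_mono (fun m => ?_) tendsto_bound
  calc
    1 / r * log (1 / 2 * (1 + exp (-2 * r * m ^ 2))) + m ^ 2
      = 1 / r * log (1 / 2 + 1 / 2 * exp (r * (-2 * m ^ 2))) + m ^ 2 := by ring_nf
    _ ≤ 1 / r * log (1 / 2) + -2 * m ^ 2 + m ^ 2 := by
      gcongr
      exact one_div_mul_log_add_mul_exp_le hr one_half_pos.le one_half_pos _
    _ = 1 / r * log (1 / 2) + -m ^ 2 := by ring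
end

section
/- (Closed form of the normalization constant for order r = 1/n with Gaussians.) Let d ≥ 1, k ≥ 1, n ≥ 1 be integers, let μ₁, …, μ_k ∈ ℝ^d and let Σ₁, …, Σ_k be symmetric positive definite d×d real matrices, with p⁽ⁱ⁾(x) = (2π)^{−d/2} · det(Σ_i)^{−1/2} · exp(−(1/2)·(x−μ_i)ᵀ Σ_i⁻¹ (x−μ_i)). For weights w₁, …, w_k ≥ 0 with Σ w_i = 1, define Q_w = Σ_i w_i Σ_i⁻¹, b_w = Σ_i w_i Σ_i⁻¹ μ_i, c_w = Σ_i w_i μ_iᵀ Σ_i⁻¹ μ_i, and F(w) = (2π)^{d/2} · det(Q_w)^{−1/2} · (∏_i (2π)^{−d·w_i/2} · det(Σ_i)^{−w_i/2}) · exp((1/2)·b_wᵀ Q_w⁻¹ b_w − (1/2)·c_w). Then ∫_{ℝ^d} ((1/k) · Σ_{i=1}^k p⁽ⁱ⁾(x)^{1/n})^n dx = (1/kⁿ) · Σ_{(n₁,…,n_k) ∈ ℕᵏ, n₁+⋯+n_k = n} (n! / (n₁!⋯n_k!)) · F(n₁/n, …, n_k/n). -/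
/-! Expanding the `n`-th power by the multinomial theorem turns the integrand into a combination of
weighted geometric means `∏ i, p i x ^ (v i / n)` of the densities; these are integrable because
AM-GM bounds them by `∑ i, (v i / n) * p i x`. A weighted geometric mean of Gaussian densities is
again the exponential of a quadratic polynomial, whose quadratic part is governed by the weighted
sum of the precision matrices. Completing the square reduces its integral to a centred Gaussian
integral, and factoring the precision matrix as `Bᵀ * B` reduces that to the standard one. -/

open MeasureTheory Real Matrix

section PowerMean

lemma cast_multinomial_eq_factorial_div {κ K : Type*} [Semifield K] [CharZero K]
    (s : Finset κ) (v : κ → ℕ) :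
    (Nat.multinomial s v : K) = (∑ i ∈ s, v i).factorial / ∏ i ∈ s, ((v i).factorial : K) := by
  refine eq_div_of_mul_eq
    (Finset.prod_ne_zero_iff.mpr fun i _ => Nat.cast_ne_zero.mpr (v i).factorial_ne_zero) ?_
  rw [mul_comm]
  exact_mod_cast Nat.multinomial_spec s v

variable {κ α : Type*} [Fintype κ] [MeasurableSpace α] {ν : Measure α}

lemma sum_rpow_one_div_pow [DecidableEq κ] {a : κ → ℝ} (ha : ∀ i, 0 ≤ a i) (n : ℕ) :
    (∑ i, a i ^ (1 / n : ℝ)) ^ n =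
      ∑ v ∈ Finset.piAntidiag Finset.univ n,
        ((n.factorial : ℝ) / ∏ i, ((v i).factorial : ℝ)) * ∏ i, a i ^ (v i / n : ℝ) := by
  rw [Finset.sum_pow_eq_sum_piAntidiag]
  refine Finset.sum_congr rfl fun v hv => ?_
  rw [cast_multinomial_eq_factorial_div, (Finset.mem_piAntidiag.mp hv).1]
  congr! 2 with i
  rw [← rpow_mul_natCast (ha i), one_div_mul_eq_div]

lemma integrable_prod_rpow {f : κ → α → ℝ} (hf : ∀ i, Integrable (f i) ν)
    (hf_nonneg : ∀ i x, 0 ≤ f i x) {w : κ → ℝ} (hw : ∀ i, 0 ≤ w i) (hw_sum : ∑ i, w i = 1) :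
    Integrable (fun x => ∏ i, f i x ^ w i) ν := by
  refine (integrable_finsetSum Finset.univ fun i _ => (hf i).const_mul (w i)).mono' ?_
    (ae_of_all _ fun x => ?_)
  · exact (Finset.aemeasurable_fun_prod _ fun i _ =>
      (hf i).aemeasurable.pow_const (w i)).aestronglyMeasurable
  · rw [norm_of_nonneg (Finset.prod_nonneg fun i _ => rpow_nonneg (hf_nonneg i x) _)]
    exact geom_mean_le_arith_mean_weighted _ _ _ (fun i _ => hw i) hw_sum
      fun i _ => hf_nonneg i x

lemma sum_div_eq_one_of_mem_piAntidiag [DecidableEq κ] {n : ℕ} (hn : n ≠ 0) {v : κ → ℕ}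
    (hv : v ∈ Finset.piAntidiag Finset.univ n) : ∑ i, (v i / n : ℝ) = 1 := by
  rw [← Finset.sum_div, ← Nat.cast_sum, (Finset.mem_piAntidiag.mp hv).1,
    div_self (Nat.cast_ne_zero.mpr hn)]

theorem integral_sum_rpow_one_div_pow [DecidableEq κ] {f : κ → α → ℝ}
    (hf : ∀ i, Integrable (f i) ν) (hf_nonneg : ∀ i x, 0 ≤ f i x) {n : ℕ} (hn : n ≠ 0) :
    ∫ x, (∑ i, f i x ^ (1 / n : ℝ)) ^ n ∂ν =
      ∑ v ∈ Finset.piAntidiag Finset.univ n,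
        ((n.factorial : ℝ) / ∏ i, ((v i).factorial : ℝ)) *
          ∫ x, ∏ i, f i x ^ (v i / n : ℝ) ∂ν := by
  have integrable_geomMean : ∀ v ∈ Finset.piAntidiag Finset.univ n,
      Integrable (fun x => ∏ i, f i x ^ (v i / n : ℝ)) ν := fun v hv =>
    integrable_prod_rpow hf hf_nonneg (fun i => by positivity)
      (sum_div_eq_one_of_mem_piAntidiag hn hv)
  simp_rw [fun x => sum_rpow_one_div_pow (fun i => hf_nonneg i x) n]
  rw [integral_finsetSum _ fun v hv => (integrable_geomMean v hv).const_mul _]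
  simp_rw [integral_const_mul]

end PowerMean

section QuadraticForm

open scoped ComplexOrder in
lemma posDef_sum_smul {ι κ 𝕜 : Type*} [Fintype κ] [RCLike 𝕜] {A : κ → Matrix ι ι 𝕜}
    (hA : ∀ i, (A i).PosDef) {w : κ → ℝ} (hw : ∀ i, 0 ≤ w i) (hw_ne : w ≠ 0) :
    (∑ i, w i • A i).PosDef := by
  classical
  obtain ⟨j, hj⟩ := Function.ne_iff.mp hw_ne
  rw [← Finset.add_sum_erase _ _ (Finset.mem_univ j)]
  exact ((hA j).smul ((hw j).lt_of_ne' hj)).add_posSemidef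
    (posSemidef_sum _ fun i _ => (hA i).posSemidef.smul (hw i))

variable {ι κ R : Type*} [Fintype ι] [Fintype κ] [CommRing R]

lemma sub_dotProduct_mulVec_sub {A : Matrix ι ι R} (hA : A.IsSymm) (x m : ι → R) :
    (x - m) ⬝ᵥ (A *ᵥ (x - m)) =
      x ⬝ᵥ (A *ᵥ x) - 2 * ((A *ᵥ m) ⬝ᵥ x) + m ⬝ᵥ (A *ᵥ m) := by
  have cross_term : m ⬝ᵥ (A *ᵥ x) = (A *ᵥ m) ⬝ᵥ x := by
    rw [dotProduct_mulVec, ← mulVec_transpose, hA.eq]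
  rw [mulVec_sub, sub_dotProduct, dotProduct_sub, dotProduct_sub, cross_term,
    dotProduct_comm x (A *ᵥ m)]
  ring

lemma sum_mul_sub_dotProduct_mulVec_sub {A : κ → Matrix ι ι R} (hA : ∀ i, (A i).IsSymm)
    (m : κ → ι → R) (w : κ → R) (x : ι → R) :
    ∑ i, w i * ((x - m i) ⬝ᵥ (A i *ᵥ (x - m i))) =
      x ⬝ᵥ ((∑ i, w i • A i) *ᵥ x) - 2 * ((∑ i, w i • (A i *ᵥ m i)) ⬝ᵥ x) +
        ∑ i, w i * (m i ⬝ᵥ (A i *ᵥ m i)) := by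
  simp_rw [sub_dotProduct_mulVec_sub (hA _), sum_mulVec, dotProduct_sum, sum_dotProduct,
    smul_mulVec, dotProduct_smul, smul_dotProduct, smul_eq_mul, Finset.mul_sum,
    ← Finset.sum_sub_distrib, ← Finset.sum_add_distrib]
  exact Finset.sum_congr rfl fun i _ => by ring

end QuadraticForm

section GaussianIntegral

variable {ι : Type*} [Fintype ι]

-- For `c ≤ 0` and `ι` nonempty both sides are the junk value `0`, as in `integral_gaussian`.
lemma integral_exp_neg_mul_dotProduct_self (c : ℝ) :
    ∫ y : ι → ℝ, exp (-c * (y ⬝ᵥ y)) = √(π / c) ^ Fintype.card ι := by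
  simp_rw [dotProduct, ← sq, Finset.mul_sum, exp_sum]
  rw [integral_fintype_prod_volume_eq_pow fun t : ℝ => exp (-c * t ^ 2), integral_gaussian]

variable [DecidableEq ι]

lemma integral_comp_mulVec {E : Type*} [NormedAddCommGroup E] [NormedSpace ℝ E]
    {B : Matrix ι ι ℝ} (hB : B.det ≠ 0) (g : (ι → ℝ) → E) :
    ∫ x, g (B *ᵥ x) = |B.det|⁻¹ • ∫ y, g y := by
  have measurableEmbedding : MeasurableEmbedding (toLin' B) :=
    (LinearMap.continuous_of_finiteDimensional _).measurableEmbedding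
      (mulVec_injective_of_isUnit ((isUnit_iff_isUnit_det B).mpr hB.isUnit))
  calc ∫ x, g (B *ᵥ x)
      = ∫ y, g y ∂(volume.map (toLin' B)) := (measurableEmbedding.integral_map g).symm
    _ = |B.det|⁻¹ • ∫ y, g y := by
      rw [map_matrix_volume_pi_eq_smul_volume_pi hB, integral_smul_measure,
        ENNReal.toReal_ofReal (abs_nonneg _), abs_inv]

lemma integral_exp_neg_mul_dotProduct_mulVec (c : ℝ) {Q : Matrix ι ι ℝ} (hQ : Q.PosDef) :
    ∫ x, exp (-c * (x ⬝ᵥ (Q *ᵥ x))) =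
      √(π / c) ^ Fintype.card ι * Q.det ^ (-(1 : ℝ) / 2) := by
  obtain ⟨B, rfl⟩ : ∃ B : Matrix ι ι ℝ, Q = Bᵀ * B := by
    open scoped MatrixOrder ComplexOrder in
    exact CStarAlgebra.nonneg_iff_eq_star_mul_self.mp hQ.posSemidef.nonneg
  have det_eq : (Bᵀ * B).det = B.det ^ 2 := by rw [det_mul, det_transpose, sq]
  have det_ne : B.det ≠ 0 := fun h => hQ.det_pos.ne' (by rw [det_eq, h, zero_pow two_ne_zero])
  have form_eq (x : ι → ℝ) : x ⬝ᵥ ((Bᵀ * B) *ᵥ x) = (B *ᵥ x) ⬝ᵥ (B *ᵥ x) := by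
    rw [← mulVec_mulVec, dotProduct_transpose_mulVec]
  simp_rw [form_eq]
  rw [integral_comp_mulVec det_ne fun y => exp (-c * (y ⬝ᵥ y)),
    integral_exp_neg_mul_dotProduct_self, det_eq, neg_div, rpow_neg (sq_nonneg _), ← sqrt_eq_rpow,
    sqrt_sq_eq_abs, smul_eq_mul, mul_comm]

lemma integral_exp_neg_half_dotProduct_mulVec {Q : Matrix ι ι ℝ} (hQ : Q.PosDef) :
    ∫ x, exp (-(1 / 2) * (x ⬝ᵥ (Q *ᵥ x))) =
      (2 * π) ^ ((Fintype.card ι : ℝ) / 2) * Q.det ^ (-(1 : ℝ) / 2) := by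
  rw [integral_exp_neg_mul_dotProduct_mulVec _ hQ, rpow_div_two_eq_sqrt _ two_pi_pos.le,
    rpow_natCast, div_div_eq_mul_div, div_one, mul_comm π]

lemma integral_exp_neg_half_dotProduct_mulVec_add_dotProduct {Q : Matrix ι ι ℝ} (hQ : Q.PosDef)
    (b : ι → ℝ) :
    ∫ x, exp (-(1 / 2) * (x ⬝ᵥ (Q *ᵥ x)) + b ⬝ᵥ x) =
      (2 * π) ^ ((Fintype.card ι : ℝ) / 2) * Q.det ^ (-(1 : ℝ) / 2) *
        exp ((1 / 2) * (b ⬝ᵥ (Q⁻¹ *ᵥ b))) := by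
  have mulVec_center : Q *ᵥ (Q⁻¹ *ᵥ b) = b := by
    rw [mulVec_mulVec, mul_nonsing_inv _ hQ.det_pos.ne'.isUnit, one_mulVec]
  have complete_square (x : ι → ℝ) : -(1 / 2) * (x ⬝ᵥ (Q *ᵥ x)) + b ⬝ᵥ x =
      -(1 / 2) * ((x - Q⁻¹ *ᵥ b) ⬝ᵥ (Q *ᵥ (x - Q⁻¹ *ᵥ b))) + (1 / 2) * (b ⬝ᵥ (Q⁻¹ *ᵥ b)) := by
    rw [sub_dotProduct_mulVec_sub (isHermitian_iff_isSymm.mp hQ.isHermitian), mulVec_center,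
      dotProduct_comm (Q⁻¹ *ᵥ b) b]
    ring
  simp_rw [complete_square, exp_add]
  rw [integral_mul_const,
    integral_sub_right_eq_self (fun x => exp (-(1 / 2) * (x ⬝ᵥ (Q *ᵥ x)))) (Q⁻¹ *ᵥ b),
    integral_exp_neg_half_dotProduct_mulVec hQ]

end GaussianIntegral

section GaussianDensity

variable {ι κ : Type*} [Fintype ι] [DecidableEq ι] [Fintype κ]

/-- The multivariate Gaussian density `N(x; m, C)` with mean `m` and covariance matrix `C`. It is
meaningful for positive definite `C` only. -/
noncomputable def gaussianDensity (m : ι → ℝ) (C : Matrix ι ι ℝ) (x : ι → ℝ) : ℝ :=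
  (2 * π) ^ (-(Fintype.card ι : ℝ) / 2) * C.det ^ (-(1 : ℝ) / 2) *
    exp (-(1 / 2) * ((x - m) ⬝ᵥ (C⁻¹ *ᵥ (x - m))))

lemma gaussianDensity_nonneg (m : ι → ℝ) {C : Matrix ι ι ℝ} (hC : C.PosDef) (x : ι → ℝ) :
    0 ≤ gaussianDensity m C x := by
  have det_pos := hC.det_pos
  unfold gaussianDensity
  positivity

lemma integral_gaussianDensity (m : ι → ℝ) {C : Matrix ι ι ℝ} (hC : C.PosDef) :
    ∫ x, gaussianDensity m C x = 1 := by
  have two_pi_factor :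
      (2 * π) ^ (-(Fintype.card ι : ℝ) / 2) * (2 * π) ^ ((Fintype.card ι : ℝ) / 2) = 1 := by
    rw [← rpow_add two_pi_pos, neg_div, neg_add_cancel, rpow_zero]
  have det_factor : C.det ^ (-(1 : ℝ) / 2) * C⁻¹.det ^ (-(1 : ℝ) / 2) = 1 := by
    rw [← mul_rpow hC.det_pos.le hC.inv.det_pos.le, ← det_mul,
      mul_nonsing_inv _ hC.det_pos.ne'.isUnit, det_one, one_rpow]
  simp_rw [gaussianDensity]
  rw [integral_const_mul, integral_sub_right_eq_self (fun x => exp (-(1 / 2) * (x ⬝ᵥ (C⁻¹ *ᵥ x)))),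
    integral_exp_neg_half_dotProduct_mulVec hC.inv, mul_mul_mul_comm, two_pi_factor, det_factor,
    one_mul]

lemma integrable_gaussianDensity (m : ι → ℝ) {C : Matrix ι ι ℝ} (hC : C.PosDef) :
    Integrable (gaussianDensity m C) :=
  .of_integral_ne_zero (by rw [integral_gaussianDensity m hC]; exact one_ne_zero)

lemma gaussianDensity_rpow (m : ι → ℝ) {C : Matrix ι ι ℝ} (hC : C.PosDef) (t : ℝ) (x : ι → ℝ) :
    gaussianDensity m C x ^ t =
      (2 * π) ^ (-(Fintype.card ι : ℝ) * t / 2) * C.det ^ (-t / 2) *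
        exp (-(1 / 2) * (t * ((x - m) ⬝ᵥ (C⁻¹ *ᵥ (x - m))))) := by
  have det_nonneg := hC.det_pos.le
  rw [gaussianDensity, mul_rpow (by positivity) (exp_nonneg _),
    mul_rpow (by positivity) (by positivity), ← rpow_mul two_pi_pos.le, ← rpow_mul det_nonneg,
    ← exp_mul]
  ring_nf

/-- The precision matrix `Q_w = ∑ i, w i • (S i)⁻¹` of the geometric mean, with weights `w`, of
Gaussian densities with covariance matrices `S i`. -/
noncomputable def geomMeanPrecision (S : κ → Matrix ι ι ℝ) (w : κ → ℝ) : Matrix ι ι ℝ :=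
  ∑ i, w i • (S i)⁻¹

/-- The vector `b_w = ∑ i, w i • (S i)⁻¹ *ᵥ μ i`, the linear coefficient in the exponent of the
geometric mean, with weights `w`, of the Gaussian densities `N(x; μ i, S i)`. -/
noncomputable def geomMeanInformation (μ : κ → ι → ℝ) (S : κ → Matrix ι ι ℝ) (w : κ → ℝ) :
    ι → ℝ :=
  ∑ i, w i • ((S i)⁻¹ *ᵥ μ i)

/-- The closed form `F(w)` for the integral of the geometric mean, with weights `w`, of the Gaussian
densities `N(x; μ i, S i)`. -/
noncomputable def geomMeanIntegral (μ : κ → ι → ℝ) (S : κ → Matrix ι ι ℝ) (w : κ → ℝ) : ℝ :=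
  (2 * π) ^ ((Fintype.card ι : ℝ) / 2) * (geomMeanPrecision S w).det ^ (-(1 : ℝ) / 2) *
    (∏ i, (2 * π) ^ (-(Fintype.card ι : ℝ) * w i / 2) * (S i).det ^ (-(w i) / 2)) *
    exp ((1 / 2) *
        (geomMeanInformation μ S w ⬝ᵥ ((geomMeanPrecision S w)⁻¹ *ᵥ geomMeanInformation μ S w))
      - (1 / 2) * ∑ i, w i * (μ i ⬝ᵥ ((S i)⁻¹ *ᵥ μ i)))

lemma prod_gaussianDensity_rpow (μ : κ → ι → ℝ) {S : κ → Matrix ι ι ℝ} (hS : ∀ i, (S i).PosDef)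
    (w : κ → ℝ) (x : ι → ℝ) :
    ∏ i, gaussianDensity (μ i) (S i) x ^ w i =
      (∏ i, (2 * π) ^ (-(Fintype.card ι : ℝ) * w i / 2) * (S i).det ^ (-(w i) / 2)) *
        exp (-(1 / 2) * ∑ i, w i * (μ i ⬝ᵥ ((S i)⁻¹ *ᵥ μ i))) *
        exp (-(1 / 2) * (x ⬝ᵥ (geomMeanPrecision S w *ᵥ x)) + geomMeanInformation μ S w ⬝ᵥ x) := by
  simp_rw [fun i => gaussianDensity_rpow (μ i) (hS i) (w i) x]
  rw [Finset.prod_mul_distrib, ← exp_sum, ← Finset.mul_sum,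
    sum_mul_sub_dotProduct_mulVec_sub (fun i => isHermitian_iff_isSymm.mp (hS i).inv.isHermitian),
    mul_assoc, ← exp_add, geomMeanPrecision, geomMeanInformation]
  ring_nf

theorem integral_prod_gaussianDensity_rpow (μ : κ → ι → ℝ) {S : κ → Matrix ι ι ℝ}
    (hS : ∀ i, (S i).PosDef) {w : κ → ℝ} (hQ : (geomMeanPrecision S w).PosDef) :
    ∫ x, ∏ i, gaussianDensity (μ i) (S i) x ^ w i = geomMeanIntegral μ S w := by
  simp_rw [prod_gaussianDensity_rpow μ hS]
  rw [integral_const_mul, integral_exp_neg_half_dotProduct_mulVec_add_dotProduct hQ,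
    geomMeanIntegral, sub_eq_add_neg, exp_add, ← neg_mul]
  ring

end GaussianDensity

/-- Closed form of the normalization constant of the power mean of order `r = 1/n` of `k`
multivariate Gaussian densities, as a finite sum over multinomial coefficients of the
weighted-geometric-mean integrals `F(n₁/n, …, n_k/n)`. -/
theorem normalization_constant_closed_form_one_over_n
    (d k n : ℕ) (hd : 1 ≤ d) (hk : 1 ≤ k) (hn : 1 ≤ n)
    (μ : Fin k → (Fin d → ℝ))
    (S : Fin k → Matrix (Fin d) (Fin d) ℝ)
    (hS : ∀ i, (S i).PosDef)
    (F : (Fin k → ℝ) → ℝ)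
    (hF : ∀ w : Fin k → ℝ,
      F w = (2 * π) ^ ((d : ℝ) / 2) * (∑ i, w i • (S i)⁻¹).det ^ (-(1 : ℝ) / 2) *
          (∏ i, (2 * π) ^ (-(d : ℝ) * w i / 2) * (S i).det ^ (-(w i) / 2)) *
          Real.exp ((1 / 2) *
              ((∑ i, w i • ((S i)⁻¹ *ᵥ μ i)) ⬝ᵥ
                ((∑ i, w i • (S i)⁻¹)⁻¹ *ᵥ (∑ i, w i • ((S i)⁻¹ *ᵥ μ i))))
            - (1 / 2) * ∑ i, w i * (μ i ⬝ᵥ ((S i)⁻¹ *ᵥ μ i)))) :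
    (∫ x : Fin d → ℝ,
        ((1 / (k : ℝ)) * ∑ i, ((2 * π) ^ (-(d : ℝ) / 2) * (S i).det ^ (-(1 : ℝ) / 2) *
            Real.exp (-(1 / 2) * ((x - μ i) ⬝ᵥ ((S i)⁻¹ *ᵥ (x - μ i))))) ^
              ((1 : ℝ) / (n : ℝ))) ^ (n : ℝ))
      = (1 / (k : ℝ) ^ n) *
          ∑ v ∈ Finset.piAntidiag (Finset.univ : Finset (Fin k)) n,
            ((Nat.factorial n : ℝ) / ∏ i, (Nat.factorial (v i) : ℝ)) *
              F (fun i => (v i : ℝ) / (n : ℝ)) := by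
  have hn_ne : n ≠ 0 := Nat.one_le_iff_ne_zero.mp hn
  have geomMean_integral : ∀ v ∈ Finset.piAntidiag Finset.univ n,
      ∫ x, ∏ i, gaussianDensity (μ i) (S i) x ^ (v i / n : ℝ) = F fun i => (v i : ℝ) / n := by
    intro v hv
    have weights_ne_zero : (fun i => (v i / n : ℝ)) ≠ 0 := fun h => by
      simpa [funext_iff.mp h] using sum_div_eq_one_of_mem_piAntidiag hn_ne hv
    have posDef_precision := posDef_sum_smul (fun i => (hS i).inv)
      (fun i => by positivity) weights_ne_zero
    rw [integral_prod_gaussianDensity_rpow μ hS posDef_precision, hF]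
    simp only [geomMeanIntegral, geomMeanPrecision, geomMeanInformation, Fintype.card_fin]
  calc
    _ = ∫ x, ((1 / (k : ℝ)) * ∑ i, gaussianDensity (μ i) (S i) x ^ (1 / n : ℝ)) ^ n := by
      simp only [gaussianDensity, Fintype.card_fin, rpow_natCast]
    _ = (1 / (k : ℝ) ^ n) * ∫ x, (∑ i, gaussianDensity (μ i) (S i) x ^ (1 / n : ℝ)) ^ n := by
      simp_rw [mul_pow, integral_const_mul, _root_.one_div_pow]
    _ = _ := by
      rw [integral_sum_rpow_one_div_pow (fun i => integrable_gaussianDensity (μ i) (hS i))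
        (fun i => gaussianDensity_nonneg (μ i) (hS i)) hn_ne]
      exact congrArg _ (Finset.sum_congr rfl fun v hv => by rw [geomMean_integral v hv])
end
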